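/- arXiv:2407.20187 — 5 statements merged into one kernel-verified Lean document; each statement's English description precedes it below -/
import Mathlib

section
/- Let G = (V, E) be a two-coloured graph and let E' be an optimal MIE solution. Then no edge of E' \ E joins two red nodes. -/
/-!
An edge joining two red nodes contributes only to red degrees, so deleting it creates no illusion.
If it was an added edge, deleting it also saves one modification, contradicting optimality.
-/

open Finset

variable {V : Type*}

/-- Number of blue neighbours of `v` in the graph on `V` with edge set `E'`. -/
def blueDeg [Fintype V] [DecidableEq V] (f : V → Bool) (E' : Finset (Sym2 V)) (v : V) : ℕ :=
  (Finset.univ.filter (fun u => u ≠ v ∧ s(u, v) ∈ E' ∧ f u = true)).card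

/-- Number of red neighbours of `v` in the graph on `V` with edge set `E'`. -/
def redDeg [Fintype V] [DecidableEq V] (f : V → Bool) (E' : Finset (Sym2 V)) (v : V) : ℕ :=
  (Finset.univ.filter (fun u => u ≠ v ∧ s(u, v) ∈ E' ∧ f u = false)).card

/-- No node is under majority illusion in `(V, E')`. -/
def NoIllusion [Fintype V] [DecidableEq V] (f : V → Bool) (E' : Finset (Sym2 V)) : Prop :=
  ∀ v : V, redDeg f E' v ≤ blueDeg f E' v

/-- An edge set of a simple graph contains no loops. -/
def Loopless (E' : Finset (Sym2 V)) : Prop := ∀ e ∈ E', ¬ e.IsDiag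

lemma Loopless.subset {E₁ E₂ : Finset (Sym2 V)} (hE₂ : Loopless E₂) (h : E₁ ⊆ E₂) : Loopless E₁ :=
  fun e he => hE₂ e (h he)

section Degree

variable [Fintype V] [DecidableEq V] {f : V → Bool}

lemma redDeg_mono {E₁ E₂ : Finset (Sym2 V)} (h : E₁ ⊆ E₂) (v : V) :
    redDeg f E₁ v ≤ redDeg f E₂ v :=
  card_le_card <| monotone_filter_right _ fun _ _ hu => ⟨hu.1, h hu.2.1, hu.2.2⟩

lemma blueDeg_sdiff_of_forall_red {D : Finset (Sym2 V)} (hD : ∀ e ∈ D, ∀ u ∈ e, f u = false)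
    (E : Finset (Sym2 V)) (v : V) : blueDeg f (E \ D) v = blueDeg f E v := by
  have blue_notMem (u : V) (hu : f u = true) : s(u, v) ∉ D := fun h =>
    Bool.false_ne_true ((hD _ h u (Sym2.mem_mk_left u v)).symm.trans hu)
  unfold blueDeg
  congr 1
  refine filter_congr fun u _ => ?_
  rw [mem_sdiff]
  have := blue_notMem u
  tauto

lemma NoIllusion.sdiff_of_forall_red {D E : Finset (Sym2 V)} (hE : NoIllusion f E)
    (hD : ∀ e ∈ D, ∀ u ∈ e, f u = false) : NoIllusion f (E \ D) := fun v =>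
  calc redDeg f (E \ D) v
    _ ≤ redDeg f E v := redDeg_mono sdiff_subset v
    _ ≤ blueDeg f E v := hE v
    _ = blueDeg f (E \ D) v := (blueDeg_sdiff_of_forall_red hD E v).symm

end Degree

lemma card_sdiff_add_card_sdiff_of_subset_sdiff {α : Type*} [DecidableEq α] {s t d : Finset α}
    (h : d ⊆ t \ s) :
    (s \ (t \ d)).card + ((t \ d) \ s).card + d.card = (s \ t).card + (t \ s).card := by
  have hds : Disjoint s d := disjoint_sdiff.mono_right h
  have hleft : s \ (t \ d) = s \ t := by
    rw [sdiff_sdiff_right', inf_eq_inter, disjoint_iff_inter_eq_empty.mp hds, sup_eq_union,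
      union_empty]
  rw [hleft, sdiff_right_comm, add_assoc, card_sdiff_add_card_eq_card h]

/-- In an optimal MIE solution, no added edge joins two red nodes. -/
theorem stmt2 [Fintype V] [DecidableEq V] (f : V → Bool) (E E' : Finset (Sym2 V))
    (hE : Loopless E)
    (hloop : Loopless E') (hfeas : NoIllusion f E')
    (hopt : ∀ E'' : Finset (Sym2 V), Loopless E'' → NoIllusion f E'' →
      (E \ E').card + (E' \ E).card ≤ (E \ E'').card + (E'' \ E).card) :
    ∀ u v : V, s(u, v) ∈ E' \ E → ¬ (f u = false ∧ f v = false) := by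
  rintro u v huv ⟨hu, hv⟩
  have hred : ∀ e ∈ ({s(u, v)} : Finset (Sym2 V)), ∀ x ∈ e, f x = false := by
    simp [hu, hv]
  have hle := hopt (E' \ {s(u, v)}) (hloop.subset sdiff_subset) (hfeas.sdiff_of_forall_red hred)
  have hcard := card_sdiff_add_card_sdiff_of_subset_sdiff (singleton_subset_iff.mpr huv)
  rw [card_singleton] at hcard
  omega
end

section
/- Let G = (V, E) be a two-coloured graph and let E' be an optimal MIE solution. Then no edge of E \ E' joins two blue nodes. -/
open Finset

variable {V : Type*}

/-!
Restoring removed edges between blue nodes never lowers a blue degree and leaves every red degree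
unchanged, so it preserves feasibility while strictly reducing the number of edits.
-/

section EditCost

variable {α : Type*} [DecidableEq α] {s t d : Finset α}

theorem card_sdiff_add_card_sdiff_union_lt (hds : d ⊆ s) (hdt : ¬ d ⊆ t) :
    (s \ (t ∪ d)).card + ((t ∪ d) \ s).card < (s \ t).card + (t \ s).card := by
  have hadded : (t ∪ d) \ s = t \ s := by
    rw [union_sdiff_distrib, sdiff_eq_empty_iff_subset.mpr hds, union_empty]
  have hremoved : s \ (t ∪ d) ⊂ s \ t := by
    obtain ⟨x, hxd, hxt⟩ := not_subset.mp hdt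
    refine ssubset_of_subset_of_ne (sdiff_subset_sdiff Subset.rfl subset_union_left) fun heq => ?_
    have hx : x ∈ s \ (t ∪ d) := heq ▸ mem_sdiff.mpr ⟨hds hxd, hxt⟩
    exact (mem_sdiff.mp hx).2 (mem_union_right t hxd)
  rw [hadded]
  exact Nat.add_lt_add_right (card_lt_card hremoved) _

end EditCost

theorem Loopless.mono {D E : Finset (Sym2 V)} (hE : Loopless E) (hDE : D ⊆ E) : Loopless D :=
  fun e he => hE e (hDE he)

theorem Loopless.union [DecidableEq V] {D E : Finset (Sym2 V)} (hD : Loopless D)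
    (hE : Loopless E) : Loopless (D ∪ E) :=
  fun e he => (mem_union.mp he).elim (hD e) (hE e)

section MajorityIllusion

variable [Fintype V] [DecidableEq V] {f : V → Bool} {D E : Finset (Sym2 V)}

theorem blueDeg_mono (f : V → Bool) (v : V) : Monotone fun E => blueDeg f E v :=
  fun _ _ hDE => card_le_card <| monotone_filter_right _ fun _ _ ⟨hne, hD, hblue⟩ =>
    ⟨hne, hDE hD, hblue⟩

theorem redDeg_union_of_forall_blue {v : V} (hD : ∀ u, s(u, v) ∈ D → f u = true) :
    redDeg f (E ∪ D) v = redDeg f E v := by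
  refine congrArg card (filter_congr fun u _ => and_congr_right fun _ =>
    and_congr_left fun hred => ?_)
  have hnot_mem : s(u, v) ∉ D := fun hmem => by simp [hD u hmem] at hred
  simp only [mem_union, hnot_mem, or_false]

theorem NoIllusion.union_of_forall_blue (hE : NoIllusion f E)
    (hD : ∀ e ∈ D, ∀ u ∈ e, f u = true) : NoIllusion f (E ∪ D) := fun v =>
  calc
    redDeg f (E ∪ D) v = redDeg f E v :=
      redDeg_union_of_forall_blue fun u he => hD s(u, v) he u (Sym2.mem_mk_left u v)
    _ ≤ blueDeg f E v := hE v
    _ ≤ blueDeg f (E ∪ D) v := blueDeg_mono f v subset_union_left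

end MajorityIllusion

/-- In an optimal MIE solution, no removed edge joins two blue nodes. -/
theorem stmt4 [Fintype V] [DecidableEq V] (f : V → Bool) (E E' : Finset (Sym2 V))
    (hE : Loopless E)
    (hloop : Loopless E') (hfeas : NoIllusion f E')
    (hopt : ∀ E'' : Finset (Sym2 V), Loopless E'' → NoIllusion f E'' →
      (E \ E').card + (E' \ E).card ≤ (E \ E'').card + (E'' \ E).card) :
    ∀ u v : V, s(u, v) ∈ E \ E' → ¬ (f u = true ∧ f v = true) := by
  rintro u v huv ⟨hu, hv⟩
  obtain ⟨hmem, hnot_mem⟩ := mem_sdiff.mp huv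
  have hsub : {s(u, v)} ⊆ E := singleton_subset_iff.mpr hmem
  have hblue : ∀ e ∈ ({s(u, v)} : Finset (Sym2 V)), ∀ w ∈ e, f w = true := by
    simp [hu, hv]
  have hle := hopt (E' ∪ {s(u, v)}) (hloop.union (hE.mono hsub)) (hfeas.union_of_forall_blue hblue)
  have hlt := card_sdiff_add_card_sdiff_union_lt hsub (singleton_subset_iff.not.mpr hnot_mem)
  exact hle.not_gt hlt
end

section
/- Let G = (V, E) be a two-coloured graph with strictly more blue nodes than red nodes, and let G^r = (V, E^r_0) be obtained from G by adding every non-edge between two blue nodes, so that the blue nodes form a clique in G^r. Then in every optimal MIRE solution E' of G^r, every edge of E^r_0 \ E' joins two red nodes. -/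
open Finset

variable {V : Type*}

/-- `G^r`: the graph obtained from `G` by adding every (non-)edge between two blue nodes. -/
def blueCliqueExt [Fintype V] [DecidableEq V] (f : V → Bool) (E : Finset (Sym2 V)) :
    Finset (Sym2 V) :=
  E ∪ Finset.univ.filter (fun e : Sym2 V => ¬ e.IsDiag ∧ ∀ v ∈ e, f v = true)

/-! Restore to a feasible edge set `S ⊆ F` all edges of `F` with a blue end. A red node gains only
blue neighbours, and a blue node now sees every other blue node, hence at least as many blue nodes
as there are red nodes in total; so the result is again feasible. A maximal feasible edge set
therefore already contains all those edges. -/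

section

variable [Fintype V] [DecidableEq V] {f : V → Bool} {F S T : Finset (Sym2 V)} {x : V}

theorem blueDeg_mono_s13 (hST : S ⊆ T) : blueDeg f S x ≤ blueDeg f T x :=
  card_le_card <| monotone_filter_right _ fun _ _ hu => ⟨hu.1, hST hu.2.1, hu.2.2⟩

theorem redDeg_le_card_red : redDeg f S x ≤ #{v | f v = false} :=
  card_le_card <| monotone_filter_right _ fun _ _ hu => hu.2.2

theorem card_blue_le_blueDeg_add_one (hS : ∀ u, f u = true → u ≠ x → s(u, x) ∈ S) :
    #{v | f v = true} ≤ blueDeg f S x + 1 := by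
  have hsub : ({v | f v = true} : Finset V) ⊆
      insert x ({u | u ≠ x ∧ s(u, x) ∈ S ∧ f u = true} : Finset V) := by
    intro u hu
    have hu : f u = true := (mem_filter_univ u).1 hu
    rcases eq_or_ne u x with rfl | hux
    · exact mem_insert_self u _
    · exact mem_insert_of_mem ((mem_filter_univ u).2 ⟨hux, hS u hu hux, hu⟩)
  exact (card_le_card hsub).trans (card_insert_le x _)

/-- The edges of `F` with at least one blue end: those that an optimal solution never removes. -/
def blueIncidentEdges (f : V → Bool) (F : Finset (Sym2 V)) : Finset (Sym2 V) :=
  {e ∈ F | ∃ v ∈ e, f v = true}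

theorem mk_mem_blueIncidentEdges {u v : V} :
    s(u, v) ∈ blueIncidentEdges f F ↔ s(u, v) ∈ F ∧ (f u = true ∨ f v = true) := by
  simp [blueIncidentEdges]

theorem redDeg_union_blueIncidentEdges (hx : f x = false) :
    redDeg f (S ∪ blueIncidentEdges f F) x = redDeg f S x := by
  have hmem : ∀ u, f u = false → (s(u, x) ∈ S ∪ blueIncidentEdges f F ↔ s(u, x) ∈ S) := by
    intro u hu
    simp [mk_mem_blueIncidentEdges, hu, hx]
  exact congrArg card <| filter_congr fun u _ =>
    and_congr_right fun _ => and_congr_left (hmem u)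

theorem NoIllusion.union_blueIncidentEdges (hS : NoIllusion f S)
    (hF : {v | f v = true}.Pairwise fun u v => s(u, v) ∈ F)
    (hmaj : #{v | f v = false} < #{v | f v = true}) :
    NoIllusion f (S ∪ blueIncidentEdges f F) := by
  intro x
  cases hx : f x with
  | false =>
    calc
      redDeg f (S ∪ blueIncidentEdges f F) x = redDeg f S x := redDeg_union_blueIncidentEdges hx
      _ ≤ blueDeg f S x := hS x
      _ ≤ blueDeg f (S ∪ blueIncidentEdges f F) x := blueDeg_mono_s13 subset_union_left
  | true =>
    have hblue : #{v | f v = true} ≤ blueDeg f (S ∪ blueIncidentEdges f F) x + 1 :=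
      card_blue_le_blueDeg_add_one fun u hu hux =>
        mem_union_right _ (mk_mem_blueIncidentEdges.2 ⟨hF hu hx hux, .inl hu⟩)
    exact redDeg_le_card_red.trans (Nat.le_of_lt_succ (hmaj.trans_le hblue))

theorem blueIncidentEdges_subset_of_maximal
    (hF : {v | f v = true}.Pairwise fun u v => s(u, v) ∈ F)
    (hmaj : #{v | f v = false} < #{v | f v = true})
    (hS : Maximal (fun T => T ⊆ F ∧ NoIllusion f T) S) :
    blueIncidentEdges f F ⊆ S := by
  have hsub : S ∪ blueIncidentEdges f F ⊆ F := union_subset hS.prop.1 (filter_subset _ _)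
  have hfeas : NoIllusion f (S ∪ blueIncidentEdges f F) :=
    hS.prop.2.union_blueIncidentEdges hF hmaj
  exact subset_union_right.trans (hS.le_of_ge ⟨hsub, hfeas⟩ subset_union_left)

theorem pairwise_mk_mem_blueCliqueExt (f : V → Bool) (E : Finset (Sym2 V)) :
    {v | f v = true}.Pairwise fun u v => s(u, v) ∈ blueCliqueExt f E := by
  intro u hu v hv huv
  have hblue : ∀ w ∈ s(u, v), f w = true := Sym2.ball.2 ⟨hu, hv⟩
  exact mem_union_right _ ((mem_filter_univ _).2 ⟨Sym2.mk_isDiag_iff.not.2 huv, hblue⟩)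

end

theorem maximal_of_card_sdiff_le {α : Type*} [DecidableEq α] {P : Finset α → Prop}
    {s t : Finset α} (hst : s ⊆ t) (hs : P s)
    (hmin : ∀ u ⊆ t, P u → #(t \ s) ≤ #(t \ u)) :
    Maximal (fun u => u ⊆ t ∧ P u) s := by
  refine ⟨⟨hst, hs⟩, fun u ⟨hut, hu⟩ hsu => ?_⟩
  have hsdiff : t \ u = t \ s :=
    eq_of_subset_of_card_le (sdiff_subset_sdiff Subset.rfl hsu) (hmin u hut hu)
  exact ((sdiff_right_inj hut hst).1 hsdiff).le

theorem stmt13_general [Fintype V] [DecidableEq V] {f : V → Bool} {F E' : Finset (Sym2 V)}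
    (hF : {v | f v = true}.Pairwise fun u v => s(u, v) ∈ F)
    (hmaj : #{v | f v = false} < #{v | f v = true})
    (hmax : Maximal (fun S => S ⊆ F ∧ NoIllusion f S) E') :
    ∀ u v : V, s(u, v) ∈ F \ E' → f u = false ∧ f v = false := by
  intro u v huv
  obtain ⟨huvF, huvE'⟩ := mem_sdiff.1 huv
  have hnot_blue : ¬(f u = true ∨ f v = true) := fun hblue =>
    huvE' (blueIncidentEdges_subset_of_maximal hF hmaj hmax
      (mk_mem_blueIncidentEdges.2 ⟨huvF, hblue⟩))
  simpa only [not_or, Bool.not_eq_true] using hnot_blue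

/-- In every optimal MIRE solution of `G^r`, every removed edge joins two red nodes. -/
theorem stmt13 [Fintype V] [DecidableEq V] (f : V → Bool) (E E' : Finset (Sym2 V))
    (hE : Loopless E)
    (hmaj : (Finset.univ.filter (fun v => f v = false)).card <
      (Finset.univ.filter (fun v => f v = true)).card)
    (hsub : E' ⊆ blueCliqueExt f E) (hfeas : NoIllusion f E')
    (hopt : ∀ E'' : Finset (Sym2 V), E'' ⊆ blueCliqueExt f E → NoIllusion f E'' →
      (blueCliqueExt f E \ E').card ≤ (blueCliqueExt f E \ E'').card) :
    ∀ u v : V, s(u, v) ∈ blueCliqueExt f E \ E' → f u = false ∧ f v = false :=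
  stmt13_general (pairwise_mk_mem_blueCliqueExt f E) hmaj
    (maximal_of_card_sdiff_le hsub hfeas hopt)
end

section
/- Let G = (V, E) be a two-coloured graph with strictly more blue nodes than red nodes, and let G^a = (V, E^a_0) be obtained from G by removing every edge between two red nodes, so that the red nodes form an independent set in G^a. Then in every optimal MIAE solution E' of G^a, every edge of E' \ E^a_0 joins two blue nodes. -/
open Finset

variable {V : Type*}

/-- `G^a`: the graph obtained from `G` by removing every edge between two red nodes. -/
def redIndepRestr [Fintype V] [DecidableEq V] (f : V → Bool) (E : Finset (Sym2 V)) :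
    Finset (Sym2 V) :=
  E.filter (fun e : Sym2 V => ¬ (∀ v ∈ e, f v = false))

/-!
Delete from a solution every added edge that has a red end. A red node then has no red neighbour
left, because the red nodes are independent in the given graph, and a blue node loses red neighbours
only. So the remaining edge set is again a solution, and a minimal solution must coincide with it.
-/

/-- Independence of the red nodes, the property for which `redIndepRestr` is built: no edge of `F`
joins two red nodes. A loop at a red node counts as such an edge. -/
def RedIndependent (f : V → Bool) (F : Finset (Sym2 V)) : Prop :=
  ∀ ⦃u v : V⦄, s(u, v) ∈ F → f u = false → f v = true

/-- Feasible MIAE solutions of the graph with edge set `F`: edge sets of simple graphs that extend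
`F` and put no node under illusion. Feasibility is separated from optimality so that the latter can
be weakened to minimality under inclusion. -/
structure IsMIAESolution [Fintype V] [DecidableEq V] (f : V → Bool) (F E : Finset (Sym2 V)) :
    Prop where
  subset : F ⊆ E
  loopless : Loopless E
  noIllusion : NoIllusion f E

/-- The edges of `E` joining two blue nodes, that is, the part of a solution which survives the
deletion of superfluous edges. -/
def blueEdges [Fintype V] [DecidableEq V] (f : V → Bool) (E : Finset (Sym2 V)) :
    Finset (Sym2 V) :=
  E.filter (fun e => ∀ w ∈ e, f w = true)

theorem minimal_of_card_sdiff_le {α : Type*} [DecidableEq α] {P : Finset α → Prop}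
    {s t : Finset α} (hP : ∀ r, P r → s ⊆ r) (ht : P t)
    (hcard : ∀ r, P r → (t \ s).card ≤ (r \ s).card) : Minimal P t := by
  refine ⟨ht, fun r hr hrt => ?_⟩
  have hsdiff : r \ s = t \ s :=
    eq_of_subset_of_card_le (sdiff_subset_sdiff hrt Subset.rfl) (hcard r hr)
  calc
    t = t \ s ∪ s := (sdiff_union_of_subset (hP t ht)).symm
    _ = r \ s ∪ s := by rw [hsdiff]
    _ ≤ r := (sdiff_union_of_subset (hP r hr)).le

theorem Loopless.mono_s14 {E E' : Finset (Sym2 V)} (hE' : Loopless E') (hsub : E ⊆ E') :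
    Loopless E :=
  fun e he => hE' e (hsub he)

section

variable [Fintype V] [DecidableEq V] {f : V → Bool} {E E' F : Finset (Sym2 V)} {u v : V}

theorem mk_mem_blueEdges : s(u, v) ∈ blueEdges f E ↔ s(u, v) ∈ E ∧ f u = true ∧ f v = true := by
  simp only [blueEdges, mem_filter, Sym2.ball]

theorem blueEdges_subset (f : V → Bool) (E : Finset (Sym2 V)) : blueEdges f E ⊆ E :=
  filter_subset _ _

theorem RedIndependent.union_blueEdges (hF : RedIndependent f F) (E : Finset (Sym2 V)) :
    RedIndependent f (F ∪ blueEdges f E) := by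
  intro u v huv hu
  rcases mem_union.1 huv with huv | huv
  · exact hF huv hu
  · exact (mk_mem_blueEdges.1 huv).2.2

theorem redIndependent_redIndepRestr (f : V → Bool) (E : Finset (Sym2 V)) :
    RedIndependent f (redIndepRestr f E) := by
  intro u v huv hu
  have hne : ¬ (f u = false ∧ f v = false) := by
    simpa only [Sym2.ball] using (mem_filter.1 huv).2
  exact Bool.eq_true_of_not_eq_false fun hv => hne ⟨hu, hv⟩

theorem redDeg_mono_s14 (h : E ⊆ E') : redDeg f E v ≤ redDeg f E' v :=
  card_le_card <| monotone_filter_right _ fun _ _ hu => ⟨hu.1, h hu.2.1, hu.2.2⟩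

theorem blueDeg_mono_s14 (h : E ⊆ E') : blueDeg f E v ≤ blueDeg f E' v :=
  card_le_card <| monotone_filter_right _ fun _ _ hu => ⟨hu.1, h hu.2.1, hu.2.2⟩

theorem blueDeg_blueEdges (hv : f v = true) : blueDeg f (blueEdges f E) v = blueDeg f E v :=
  (blueDeg_mono_s14 (blueEdges_subset f E)).antisymm <| card_le_card <|
    monotone_filter_right _ fun _ _ ⟨hne, hmem, hu⟩ =>
      ⟨hne, mk_mem_blueEdges.2 ⟨hmem, hu, hv⟩, hu⟩

theorem RedIndependent.redDeg_eq_zero (hE : RedIndependent f E) (hv : f v = false) :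
    redDeg f E v = 0 :=
  card_eq_zero.2 <| filter_eq_empty_iff.2 fun _ _ ⟨_, hmem, hu⟩ =>
    Bool.false_ne_true (hv.symm.trans (hE hmem hu))

theorem NoIllusion.of_blueEdges_subset (h : NoIllusion f E') (hsub : E ⊆ E')
    (hblue : blueEdges f E' ⊆ E) (hE : RedIndependent f E) : NoIllusion f E := by
  intro v
  cases hv : f v with
  | false => exact (hE.redDeg_eq_zero hv).trans_le (Nat.zero_le _)
  | true =>
    calc
      redDeg f E v ≤ redDeg f E' v := redDeg_mono_s14 hsub
      _ ≤ blueDeg f E' v := h v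
      _ = blueDeg f (blueEdges f E') v := (blueDeg_blueEdges hv).symm
      _ ≤ blueDeg f E v := blueDeg_mono_s14 hblue

theorem IsMIAESolution.union_blueEdges (h : IsMIAESolution f F E) (hF : RedIndependent f F) :
    IsMIAESolution f F (F ∪ blueEdges f E) := by
  have hsub : F ∪ blueEdges f E ⊆ E := union_subset h.subset (blueEdges_subset f E)
  exact ⟨subset_union_left, h.loopless.mono_s14 hsub,
    h.noIllusion.of_blueEdges_subset hsub subset_union_right (hF.union_blueEdges E)⟩

end

theorem stmt14_general [Fintype V] [DecidableEq V] {f : V → Bool} {F E : Finset (Sym2 V)}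
    (hF : RedIndependent f F) (hE : Minimal (IsMIAESolution f F) E) :
    ∀ u v : V, s(u, v) ∈ E \ F → f u = true ∧ f v = true := by
  intro u v huv
  obtain ⟨hmem, hnew⟩ := mem_sdiff.1 huv
  have hsub : F ∪ blueEdges f E ⊆ E := union_subset hE.prop.subset (blueEdges_subset f E)
  have hkept : s(u, v) ∈ F ∪ blueEdges f E :=
    hE.le_of_le (hE.prop.union_blueEdges hF) hsub hmem
  exact (mk_mem_blueEdges.1 ((mem_union.1 hkept).resolve_left hnew)).2

/-- In every optimal MIAE solution of `G^a`, every added edge joins two blue nodes. -/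
theorem stmt14 [Fintype V] [DecidableEq V] (f : V → Bool) (E E' : Finset (Sym2 V))
    (hE : Loopless E)
    (hmaj : (Finset.univ.filter (fun v => f v = false)).card <
      (Finset.univ.filter (fun v => f v = true)).card)
    (hsub : redIndepRestr f E ⊆ E') (hloop : Loopless E') (hfeas : NoIllusion f E')
    (hopt : ∀ E'' : Finset (Sym2 V), redIndepRestr f E ⊆ E'' → Loopless E'' →
      NoIllusion f E'' → (E' \ redIndepRestr f E).card ≤ (E'' \ redIndepRestr f E).card) :
    ∀ u v : V, s(u, v) ∈ E' \ redIndepRestr f E → f u = true ∧ f v = true :=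
  stmt14_general (redIndependent_redIndepRestr f E) <|
    minimal_of_card_sdiff_le (fun _ h => h.subset) ⟨hsub, hloop, hfeas⟩
      fun E'' h => hopt E'' h.subset h.loopless h.noIllusion
end

section
/- Let G = (V, E) be a two-coloured graph with strictly more blue nodes than red nodes. Let G^a = (V, E^a_0) be obtained from G by removing every edge between two red nodes, and let G^r = (V, E^r_0) be obtained from G by adding every non-edge between two blue nodes. Let A = E^a \ E^a_0 for an optimal MIAE solution E^a of G^a, and let D = E^r_0 \ E^r for an optimal MIRE solution E^r of G^r. Then no node is under illusion in (V, (E ∪ A) \ D), and |A| + |D| equals the minimum of |E \ E'| + |E' \ E| over all feasible MIE solutions E' of G; that is, (E ∪ A) \ D is an optimal MIE solution of G. -/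
open Finset

variable {V : Type*}

/-!
An edit can only help if it adds a blue–blue edge or removes a red–red edge, and such an edit helps
both of its endpoints. Every other useful edit joins or separates a blue and a red node: it can be
charged to the blue endpoint when an edge is removed and to the red endpoint when one is added, and
exchanged for a helpful edit at that endpoint. So some optimal solution consists of helpful edits
alone. For these the blue nodes see only the added edges and the red nodes only the removed ones,
and the problem splits into MIAE on `G^a` and MIRE on `G^r`.

The exchange needs every blue node to have fewer red neighbours than there are blue nodes. This is
so as soon as MIAE on `G^a` is feasible: a feasible solution keeps all red neighbours of a blue node
and has at least as many blue ones, none of which is the node itself.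
-/

open scoped symmDiff

section SetDifference

variable {α : Type*} [DecidableEq α] {s t u : Finset α}

lemma card_symmDiff_eq_add (s t : Finset α) : #(s ∆ t) = #(s \ t) + #(t \ s) :=
  card_union_of_disjoint disjoint_sdiff_sdiff

lemma union_sdiff_sdiff_left (hst : Disjoint s t) (hus : u ⊆ s) : ((s ∪ t) \ u) \ s = t := by
  rw [sdiff_sdiff_left, sup_eq_union, union_eq_right.2 hus, union_sdiff_cancel_left hst]

lemma sdiff_union_sdiff_left (hus : u ⊆ s) : s \ ((s ∪ t) \ u) = u := by
  ext
  grind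

end SetDifference

section ColorDegree

variable [Fintype V] [DecidableEq V] {f : V → Bool} {c : Bool} {S T U : Finset (Sym2 V)} {v : V}

/-- The number of neighbours of `v` that have colour `c`. By definition `blueDeg f` is
`colorDeg f true` and `redDeg f` is `colorDeg f false`. -/
def colorDeg (f : V → Bool) (c : Bool) (S : Finset (Sym2 V)) (v : V) : ℕ :=
  #{u | u ≠ v ∧ s(u, v) ∈ S ∧ f u = c}

lemma noIllusion_iff : NoIllusion f S ↔ ∀ v, colorDeg f false S v ≤ colorDeg f true S v :=
  Iff.rfl

lemma colorDeg_le_colorDeg (h : ∀ u, u ≠ v → f u = c → s(u, v) ∈ S → s(u, v) ∈ T) :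
    colorDeg f c S v ≤ colorDeg f c T v :=
  card_le_card <| monotone_filter_right _ fun u _ ⟨huv, hS, hu⟩ ↦ ⟨huv, h u huv hu hS, hu⟩

lemma colorDeg_mono (h : S ⊆ T) : colorDeg f c S v ≤ colorDeg f c T v :=
  colorDeg_le_colorDeg fun _ _ _ hS ↦ h hS

lemma colorDeg_congr (h : ∀ u, f u = c → (s(u, v) ∈ S ↔ s(u, v) ∈ T)) :
    colorDeg f c S v = colorDeg f c T v :=
  le_antisymm (colorDeg_le_colorDeg fun u _ hu ↦ (h u hu).1)
    (colorDeg_le_colorDeg fun u _ hu ↦ (h u hu).2)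

lemma colorDeg_eq_zero (h : ∀ u, f u = c → s(u, v) ∉ S) : colorDeg f c S v = 0 :=
  card_eq_zero.2 <| filter_eq_empty_iff.2 fun u _ ⟨_, hS, hu⟩ ↦ h u hu hS

lemma colorDeg_le_add (h : ∀ u, u ≠ v → f u = c → s(u, v) ∈ S → s(u, v) ∈ T ∨ s(u, v) ∈ U) :
    colorDeg f c S v ≤ colorDeg f c T v + colorDeg f c U v := by
  refine (card_le_card fun u hu ↦ ?_).trans (card_union_le _ _)
  simp only [mem_filter_univ, mem_union] at hu ⊢
  have := h u hu.1 hu.2.2 hu.2.1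
  tauto

lemma colorDeg_add_le (hTU : ∀ u, f u = c → s(u, v) ∈ T → s(u, v) ∉ U)
    (hT : ∀ u, f u = c → s(u, v) ∈ T → s(u, v) ∈ S)
    (hU : ∀ u, f u = c → s(u, v) ∈ U → s(u, v) ∈ S) :
    colorDeg f c T v + colorDeg f c U v ≤ colorDeg f c S v := by
  rw [colorDeg, colorDeg, ← card_union_of_disjoint
    (disjoint_filter.2 fun u _ hu hu' ↦ hTU u hu.2.2 hu.2.1 hu'.2.1)]
  refine card_le_card fun u hu ↦ ?_
  simp only [mem_filter_univ, mem_union] at hu ⊢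
  have := hT u
  have := hU u
  tauto

lemma colorDeg_self_lt (f : V → Bool) (S : Finset (Sym2 V)) (v : V) :
    colorDeg f (f v) S v < #{u | f u = f v} :=
  card_lt_card <| (ssubset_iff_of_subset (monotone_filter_right _ fun _ _ hu ↦ hu.2.2)).2
    ⟨v, by simp⟩

lemma card_le_colorDeg_self_add_one (h : ∀ u, u ≠ v → f u = f v → s(u, v) ∈ S) :
    #{u | f u = f v} ≤ colorDeg f (f v) S v + 1 := by
  refine (card_le_card fun u hu ↦ ?_).trans (card_insert_le v _)
  simp only [mem_filter_univ, mem_insert] at hu ⊢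
  exact or_iff_not_imp_left.2 fun huv ↦ ⟨huv, h u huv hu, hu⟩

lemma exists_subset_card_le_colorDeg {k : ℕ} (h : k ≤ colorDeg f c S v) :
    ∃ T ⊆ S, #T ≤ k ∧ k ≤ colorDeg f c T v := by
  obtain ⟨N, hN, hk⟩ := exists_subset_card_eq h
  have hN' : ∀ u ∈ N, u ≠ v ∧ s(u, v) ∈ S ∧ f u = c := fun u hu ↦ mem_filter_univ u |>.1 (hN hu)
  refine ⟨N.image (s(·, v)), image_subset_iff.2 fun u hu ↦ (hN' u hu).2.1,
    card_image_le.trans hk.le, hk.ge.trans <| card_le_card fun u hu ↦ ?_⟩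
  exact mem_filter_univ u |>.2 ⟨(hN' u hu).1, mem_image_of_mem _ hu, (hN' u hu).2.2⟩

lemma exists_superset_forall_le_colorDeg (c : V → Bool) (d : V → ℕ) (hST : S ⊆ T)
    (hd : ∀ v, d v ≤ colorDeg f (c v) T v) :
    ∃ Y, S ⊆ Y ∧ Y ⊆ T ∧ (∀ v, d v ≤ colorDeg f (c v) Y v) ∧
      #(Y \ S) ≤ ∑ v, (d v - colorDeg f (c v) S v) := by
  have hdeficit (v : V) : d v - colorDeg f (c v) S v ≤ colorDeg f (c v) (T \ S) v := by
    rw [tsub_le_iff_left]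
    refine (hd v).trans (colorDeg_le_add fun u _ _ hT ↦ ?_)
    simpa [hT] using em (s(u, v) ∈ S)
  choose Z hZT hZcard hZ using fun v ↦ exists_subset_card_le_colorDeg (hdeficit v)
  have hZY (v : V) : Z v ⊆ univ.biUnion Z := subset_biUnion_of_mem Z (mem_univ v)
  refine ⟨S ∪ univ.biUnion Z, subset_union_left, union_subset hST <| biUnion_subset.2
    fun v _ ↦ (hZT v).trans sdiff_subset, fun v ↦ ?_, ?_⟩
  · calc d v ≤ colorDeg f (c v) S v + colorDeg f (c v) (Z v) v := tsub_le_iff_left.1 (hZ v)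
      _ ≤ colorDeg f (c v) (S ∪ univ.biUnion Z) v :=
        colorDeg_add_le (fun _ _ hS hZ ↦ (mem_sdiff.1 (hZT v hZ)).2 hS)
          (fun _ _ hS ↦ mem_union_left _ hS) (fun _ _ hZ ↦ mem_union_right _ (hZY v hZ))
  · calc #((S ∪ univ.biUnion Z) \ S) ≤ #(univ.biUnion Z) := by
          rw [union_sdiff_left]; exact card_le_card sdiff_subset
      _ ≤ ∑ v, #(Z v) := card_biUnion_le
      _ ≤ ∑ v, (d v - colorDeg f (c v) S v) := sum_le_sum fun v _ ↦ hZcard v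

-- `(e.map f).IsDiag` says that the endpoints of `e` have the same colour.
lemma sum_colorDeg_not_le_card (f : V → Bool) (hST : Disjoint S T) :
    ∑ v, colorDeg f (!f v) (if f v then S else T) v ≤ #{e ∈ S ∪ T | ¬(e.map f).IsDiag} := by
  simp_rw [colorDeg]
  rw [← card_sigma]
  -- An edge is counted at one endpoint only: the blue one if it lies in `S`, the red one if in `T`.
  refine card_le_card_of_injOn (fun p ↦ s(p.2, p.1)) ?_ ?_
  · rintro ⟨v, u⟩ h
    have : f u = !f v ∧ s(u, v) ∈ if f v then S else T := by simp_all
    cases hv : f v <;> simp_all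
  · rintro ⟨v, u⟩ h ⟨v', u'⟩ h' heq
    rcases Sym2.eq_iff.1 heq with ⟨rfl, rfl⟩ | ⟨rfl, rfl⟩
    · rfl
    · have : s(u, v) ∈ S → s(u, v) ∉ T := fun hS ↦ disjoint_left.1 hST hS
      cases hv : f v <;> simp_all [Sym2.eq_swap]

end ColorDegree

section Repair

variable [Fintype V] [DecidableEq V] {f : V → Bool} {E E' S Y : Finset (Sym2 V)} {u v : V}

/-- The edges whose status is worth changing: blue–blue non-edges (to be added) and red–red edges
(to be removed). That `S` arises from `E` by such changes only is expressed by
`E ∆ S ⊆ repairEdges f E`. -/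
def repairEdges (f : V → Bool) (E : Finset (Sym2 V)) : Finset (Sym2 V) :=
  {e | ¬e.IsDiag ∧ ((∀ v ∈ e, f v = true) ∧ e ∉ E ∨ (∀ v ∈ e, f v = false) ∧ e ∈ E)}

lemma mk_mem_repairEdges :
    s(u, v) ∈ repairEdges f E ↔ u ≠ v ∧ f u = f v ∧ (f v = true ↔ s(u, v) ∉ E) := by
  cases hu : f u <;> cases hv : f v <;> simp [repairEdges, hu, hv]

lemma mk_mem_redIndepRestr :
    s(u, v) ∈ redIndepRestr f E ↔ s(u, v) ∈ E ∧ (f u = true ∨ f v = true) := by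
  cases hu : f u <;> cases hv : f v <;> simp [redIndepRestr, hu, hv]

lemma mk_mem_blueCliqueExt :
    s(u, v) ∈ blueCliqueExt f E ↔ s(u, v) ∈ E ∨ u ≠ v ∧ f u = true ∧ f v = true := by
  simp [blueCliqueExt]

lemma mk_mem_iff_or_of_symmDiff_subset (h : E ∆ S ⊆ repairEdges f E) :
    (s(u, v) ∈ S ↔ s(u, v) ∈ E) ∨ u ≠ v ∧ f u = f v ∧ (f v = true ↔ s(u, v) ∉ E) := by
  rw [← mk_mem_repairEdges]
  have := @h s(u, v)
  rw [mem_symmDiff] at this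
  tauto

lemma Loopless.of_symmDiff_subset_repairEdges (hE : Loopless E) (h : E ∆ S ⊆ repairEdges f E) :
    Loopless S := fun e heS ↦ by
  by_cases heE : e ∈ E
  · exact hE e heE
  · exact (mem_filter_univ e |>.1 <| h <| mem_symmDiff.2 <| .inr ⟨heS, heE⟩).1

/-- Every blue node has fewer red neighbours than there are blue nodes, so that it is not under
illusion once it is adjacent to all other blue nodes. -/
def BlueOutnumbers (f : V → Bool) (S : Finset (Sym2 V)) : Prop :=
  ∀ v, f v = true → colorDeg f false S v < #{u | f u = true}

lemma noIllusion_iff_forall_blue (hS : ∀ u v, f u = false → f v = false → s(u, v) ∉ S) :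
    NoIllusion f S ↔ ∀ v, f v = true → colorDeg f false S v ≤ colorDeg f true S v := by
  refine ⟨fun h v _ ↦ h v, fun h v ↦ ?_⟩
  cases hv : f v
  · exact (colorDeg_eq_zero fun u hu ↦ hS u v hu hv).trans_le (Nat.zero_le _)
  · exact h v hv

lemma noIllusion_iff_forall_red
    (hS : ∀ u v, u ≠ v → f u = true → f v = true → s(u, v) ∈ S)
    (hout : BlueOutnumbers f S) :
    NoIllusion f S ↔ ∀ v, f v = false → colorDeg f false S v ≤ colorDeg f true S v := by
  refine ⟨fun h v _ ↦ h v, fun h v ↦ ?_⟩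
  cases hv : f v
  · exact h v hv
  · have hblue := card_le_colorDeg_self_add_one (f := f) (v := v) fun u huv hu ↦
      hS u v huv (hu.trans hv) hv
    rw [hv] at hblue
    exact Nat.le_of_lt_succ ((hout v hv).trans_le hblue)

lemma noIllusion_redIndepRestr_union_iff (h : E ∆ S ⊆ repairEdges f E) :
    NoIllusion f (redIndepRestr f E ∪ S \ E) ↔
      ∀ v, f v = true → colorDeg f false S v ≤ colorDeg f true S v := by
  rw [noIllusion_iff_forall_blue]
  · refine forall₂_congr fun v hv ↦ ?_
    have hmem (u : V) : s(u, v) ∈ redIndepRestr f E ∪ S \ E ↔ s(u, v) ∈ S := by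
      have := mk_mem_iff_or_of_symmDiff_subset h (u := u) (v := v)
      rw [mem_union, mem_sdiff, mk_mem_redIndepRestr]
      tauto
    rw [colorDeg_congr fun u _ ↦ hmem u, colorDeg_congr fun u _ ↦ hmem u]
  · intro u v hu hv
    have := mk_mem_iff_or_of_symmDiff_subset h (u := u) (v := v)
    rw [mem_union, mem_sdiff, mk_mem_redIndepRestr]
    simp only [hu, hv, Bool.false_eq_true] at this ⊢
    tauto

lemma noIllusion_blueCliqueExt_sdiff_iff (h : E ∆ S ⊆ repairEdges f E)
    (hout : BlueOutnumbers f E) :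
    NoIllusion f (blueCliqueExt f E \ (E \ S)) ↔
      ∀ v, f v = false → colorDeg f false S v ≤ colorDeg f true S v := by
  rw [noIllusion_iff_forall_red]
  · refine forall₂_congr fun v hv ↦ ?_
    have hmem (u : V) : s(u, v) ∈ blueCliqueExt f E \ (E \ S) ↔ s(u, v) ∈ S := by
      have := mk_mem_iff_or_of_symmDiff_subset h (u := u) (v := v)
      rw [mem_sdiff, mem_sdiff, mk_mem_blueCliqueExt]
      simp only [hv, Bool.false_eq_true] at this ⊢
      tauto
    rw [colorDeg_congr fun u _ ↦ hmem u, colorDeg_congr fun u _ ↦ hmem u]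
  · intro u v huv hu hv
    have := mk_mem_iff_or_of_symmDiff_subset h (u := u) (v := v)
    rw [mem_sdiff, mem_sdiff, mk_mem_blueCliqueExt]
    tauto
  · refine fun v hv ↦ (colorDeg_le_colorDeg fun u _ hu hmem ↦ ?_).trans_lt (hout v hv)
    simpa [mk_mem_blueCliqueExt, hu] using (mem_sdiff.1 hmem).1

lemma noIllusion_iff_of_symmDiff_subset (h : E ∆ S ⊆ repairEdges f E) (hout : BlueOutnumbers f E) :
    NoIllusion f S ↔ NoIllusion f (redIndepRestr f E ∪ S \ E) ∧
      NoIllusion f (blueCliqueExt f E \ (E \ S)) := by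
  rw [noIllusion_redIndepRestr_union_iff h, noIllusion_blueCliqueExt_sdiff_iff h hout,
    ← forall_and]
  refine forall_congr' fun v ↦ ?_
  cases f v <;> simp [redDeg, blueDeg, colorDeg]

lemma noIllusion_symmDiff (hY : Y ⊆ repairEdges f E)
    (hcover : ∀ v, colorDeg f false E v ≤ colorDeg f true E v + colorDeg f (f v) Y v) :
    NoIllusion f (E ∆ Y) := by
  refine noIllusion_iff.2 fun v ↦ ?_
  have hv := hcover v
  have hmem (u : V) (h : s(u, v) ∈ Y) : f u = f v ∧ (f v = true ↔ s(u, v) ∉ E) :=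
    (mk_mem_repairEdges.1 (hY h)).2
  cases hc : f v <;> rw [hc] at hv
  · have hred : colorDeg f false (E ∆ Y) v + colorDeg f false Y v ≤ colorDeg f false E v :=
      colorDeg_add_le (by grind [mem_symmDiff]) (by grind [mem_symmDiff]) (by grind)
    have hblue : colorDeg f true E v ≤ colorDeg f true (E ∆ Y) v :=
      colorDeg_le_colorDeg (by grind [mem_symmDiff])
    lia
  · have hred : colorDeg f false (E ∆ Y) v ≤ colorDeg f false E v :=
      colorDeg_le_colorDeg (by grind [mem_symmDiff])
    have hblue : colorDeg f true E v + colorDeg f true Y v ≤ colorDeg f true (E ∆ Y) v :=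
      colorDeg_add_le (by grind) (by grind [mem_symmDiff]) (by grind [mem_symmDiff])
    lia

lemma colorDeg_false_le_add_repairEdges
    (hout : BlueOutnumbers f E) (v : V) :
    colorDeg f false E v ≤ colorDeg f true E v + colorDeg f (f v) (repairEdges f E) v := by
  cases hv : f v
  · refine le_add_left (colorDeg_le_colorDeg fun u huv hu hE ↦ ?_)
    simp [mk_mem_repairEdges, *]
  · have hblue := card_le_colorDeg_self_add_one (f := f) (v := v) (S := E ∪ repairEdges f E)
      fun u huv hu ↦ by
        rw [mem_union, mk_mem_repairEdges]
        tauto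
    have hunion : colorDeg f true (E ∪ repairEdges f E) v ≤ _ :=
      colorDeg_le_add fun u _ _ h ↦ mem_union.1 h
    have := hout v hv
    rw [hv] at hblue
    lia

lemma NoIllusion.colorDeg_false_le (h : NoIllusion f E') (v : V) :
    colorDeg f false E v ≤ colorDeg f true E v +
      (colorDeg f (f v) (E ∆ E' ∩ repairEdges f E) v +
        colorDeg f (!f v) (if f v then E \ E' else E' \ E) v) := by
  have hv := noIllusion_iff.1 h v
  cases hc : f v
  · have hred : colorDeg f false E v ≤
        colorDeg f false E' v + colorDeg f false (E ∆ E' ∩ repairEdges f E) v := by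
      refine colorDeg_le_add fun u huv hu hE ↦ ?_
      simp [mem_symmDiff, mk_mem_repairEdges, *, em]
    have hblue : colorDeg f true E' v ≤ colorDeg f true E v + colorDeg f true (E' \ E) v := by
      refine colorDeg_le_add fun u _ _ hE' ↦ ?_
      simp [hE', em]
    simp only [Bool.not_false, Bool.false_eq_true, if_false]
    lia
  · have hred : colorDeg f false E v ≤ colorDeg f false E' v + colorDeg f false (E \ E') v := by
      refine colorDeg_le_add fun u _ _ hE ↦ ?_
      simp [hE, em]
    have hblue : colorDeg f true E' v ≤
        colorDeg f true E v + colorDeg f true (E ∆ E' ∩ repairEdges f E) v := by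
      refine colorDeg_le_add fun u huv hu hE' ↦ ?_
      simp [mem_symmDiff, mk_mem_repairEdges, *, em]
    simp only [Bool.not_true, if_true]
    lia

lemma NoIllusion.exists_repair (h : NoIllusion f E')
    (hout : BlueOutnumbers f E) :
    ∃ S, E ∆ S ⊆ repairEdges f E ∧ NoIllusion f S ∧
      #(E \ S) + #(S \ E) ≤ #(E \ E') + #(E' \ E) := by
  set X := E ∆ E' ∩ repairEdges f E
  obtain ⟨Y, hXY, hY, hcover, hcard⟩ := exists_superset_forall_le_colorDeg f
    (fun v ↦ colorDeg f false E v - colorDeg f true E v) (inter_subset_right : X ⊆ _)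
    fun v ↦ tsub_le_iff_left.2 (colorDeg_false_le_add_repairEdges hout v)
  refine ⟨E ∆ Y, by rwa [symmDiff_symmDiff_cancel_left],
    noIllusion_symmDiff hY fun v ↦ tsub_le_iff_left.1 (hcover v), ?_⟩
  have hmixed : Disjoint X {e ∈ E ∆ E' | ¬(e.map f).IsDiag} := by
    refine disjoint_left.2 fun e heX he ↦ (mem_filter.1 he).2 ?_
    induction e with | _ u v => exact (mk_mem_repairEdges.1 (mem_inter.1 heX).2).2.1
  have hcharge : #(Y \ X) ≤ #{e ∈ E ∆ E' | ¬(e.map f).IsDiag} :=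
    calc #(Y \ X) ≤ ∑ v, colorDeg f (!f v) (if f v then E \ E' else E' \ E) v :=
          hcard.trans <| sum_le_sum fun v _ ↦ by
            rw [tsub_le_iff_left, tsub_le_iff_left]
            exact h.colorDeg_false_le v
      _ ≤ #{e ∈ E ∆ E' | ¬(e.map f).IsDiag} := sum_colorDeg_not_le_card f disjoint_sdiff_sdiff
  rw [← card_symmDiff_eq_add, ← card_symmDiff_eq_add, symmDiff_symmDiff_cancel_left]
  calc #Y = #(Y \ X) + #X := (card_sdiff_add_card_eq_card hXY).symm
    _ ≤ #X + #{e ∈ E ∆ E' | ¬(e.map f).IsDiag} := by lia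
    _ = #(X ∪ {e ∈ E ∆ E' | ¬(e.map f).IsDiag}) := (card_union_of_disjoint hmixed).symm
    _ ≤ #(E ∆ E') := card_le_card (union_subset inter_subset_left (filter_subset _ _))

end Repair

section Optimal

variable [Fintype V] [DecidableEq V] {f : V → Bool} {E E' Ea Er S : Finset (Sym2 V)}

/-- Feasible MIAE solutions of `(V, F)`: majority illusion is eliminated by adding edges. -/
structure IsMIAE (f : V → Bool) (F E' : Finset (Sym2 V)) : Prop where
  subset : F ⊆ E'
  loopless : Loopless E'
  noIllusion : NoIllusion f E'

/-- Optimal MIAE solutions of `(V, F)`: as few edges as possible are added. -/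
def IsOptimalMIAE (f : V → Bool) (F E' : Finset (Sym2 V)) : Prop :=
  IsMIAE f F E' ∧ ∀ S, IsMIAE f F S → #(E' \ F) ≤ #(S \ F)

/-- Feasible MIRE solutions of `(V, F)`: majority illusion is eliminated by removing edges. They are
loopless if `F` is. -/
structure IsMIRE (f : V → Bool) (F E' : Finset (Sym2 V)) : Prop where
  subset : E' ⊆ F
  noIllusion : NoIllusion f E'

/-- Optimal MIRE solutions of `(V, F)`: as few edges as possible are removed. -/
def IsOptimalMIRE (f : V → Bool) (F E' : Finset (Sym2 V)) : Prop :=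
  IsMIRE f F E' ∧ ∀ S, IsMIRE f F S → #(F \ E') ≤ #(F \ S)

lemma IsMIAE.blueOutnumbers (h : IsMIAE f (redIndepRestr f E) Ea) : BlueOutnumbers f E := fun v hv ↦
  calc colorDeg f false E v ≤ colorDeg f false Ea v :=
        colorDeg_le_colorDeg fun _ _ _ hE ↦ h.subset (mk_mem_redIndepRestr.2 ⟨hE, .inr hv⟩)
    _ ≤ colorDeg f true Ea v := h.noIllusion v
    _ < #{u | f u = true} := by simpa only [hv] using colorDeg_self_lt f Ea v

lemma IsOptimalMIAE.sdiff_subset_repairEdges (h : IsOptimalMIAE f (redIndepRestr f E) Ea) :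
    Ea \ redIndepRestr f E ⊆ repairEdges f E \ E := by
  obtain ⟨⟨hsub, hloop, hfeas⟩, hopt⟩ := h
  set T := {e ∈ Ea | e ∈ redIndepRestr f E ∨ ∀ v ∈ e, f v = true} with hT
  have hTEa : T ⊆ Ea := filter_subset _ _
  have hTfeas : NoIllusion f T := by
    refine (noIllusion_iff_forall_blue fun u v hu hv ↦ ?_).2 fun v hv ↦
      (colorDeg_mono hTEa).trans <| (hfeas v).trans <| colorDeg_le_colorDeg fun u _ hu hEa ↦ ?_
    · simp [hT, mk_mem_redIndepRestr, hu, hv]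
    · simp [hT, hEa, hu, hv]
  have hcard : #(Ea \ redIndepRestr f E) ≤ #(T \ redIndepRestr f E) := hopt T
    ⟨fun e he ↦ mem_filter.2 ⟨hsub he, .inl he⟩, fun e he ↦ hloop e (hTEa he), hTfeas⟩
  rw [← eq_of_subset_of_card_le (sdiff_subset_sdiff hTEa subset_rfl) hcard]
  intro e he
  have hloop := hloop e
  induction e with | _ u v
  simp only [hT, mem_sdiff, mem_filter, mk_mem_redIndepRestr, Sym2.ball, mk_mem_repairEdges,
    Sym2.mk_isDiag_iff] at he hloop ⊢
  grind

lemma IsOptimalMIRE.sdiff_subset_repairEdges (hE : Loopless E) (hout : BlueOutnumbers f E)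
    (h : IsOptimalMIRE f (blueCliqueExt f E) Er) :
    blueCliqueExt f E \ Er ⊆ repairEdges f E ∩ E := by
  obtain ⟨⟨hsub, hfeas⟩, hopt⟩ := h
  set T := {e ∈ blueCliqueExt f E | e ∈ Er ∨ ¬∀ v ∈ e, f v = false} with hT
  have hErT : Er ⊆ T := fun e he ↦ mem_filter.2 ⟨hsub he, .inl he⟩
  have hTfeas : NoIllusion f T := by
    refine (noIllusion_iff_forall_red (fun u v huv hu hv ↦ ?_) fun v hv ↦ ?_).2 fun v hv ↦
      (colorDeg_le_colorDeg fun u _ hu h ↦ ?_).trans <| (hfeas v).trans <| colorDeg_mono hErT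
    · simp [hT, mk_mem_blueCliqueExt, huv, hu, hv]
    · refine (colorDeg_le_colorDeg fun u _ hu h ↦ ?_).trans_lt (hout v hv)
      simpa [mk_mem_blueCliqueExt, hu] using (mem_filter.1 h).1
    · simpa [hu, hv] using (mem_filter.1 h).2
  have hcard : #(blueCliqueExt f E \ Er) ≤ #(blueCliqueExt f E \ T) :=
    hopt T ⟨filter_subset _ _, hTfeas⟩
  rw [← eq_of_subset_of_card_le (sdiff_subset_sdiff subset_rfl hErT) hcard]
  intro e he
  have hloop := hE e
  induction e with | _ u v
  simp only [hT, mem_sdiff, mem_filter, mk_mem_blueCliqueExt, Sym2.ball, mem_inter,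
    mk_mem_repairEdges, Sym2.mk_isDiag_iff] at he hloop ⊢
  grind

lemma IsOptimalMIAE.card_sdiff_le (h : IsOptimalMIAE f (redIndepRestr f E) Ea) (hE : Loopless E)
    (hS : E ∆ S ⊆ repairEdges f E) (hfeas : NoIllusion f S) :
    #(Ea \ redIndepRestr f E) ≤ #(S \ E) := by
  have hloop := hE.of_symmDiff_subset_repairEdges hS
  refine (h.2 (redIndepRestr f E ∪ S \ E) ⟨subset_union_left, fun e he ↦ ?_, ?_⟩).trans ?_
  · rcases mem_union.1 he with he | he
    exacts [hE e (mem_filter.1 he).1, hloop e (mem_sdiff.1 he).1]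
  · exact (noIllusion_redIndepRestr_union_iff hS).2 fun v _ ↦ hfeas v
  · rw [union_sdiff_left]
    exact card_le_card sdiff_subset

lemma IsOptimalMIRE.card_sdiff_le (h : IsOptimalMIRE f (blueCliqueExt f E) Er)
    (hout : BlueOutnumbers f E) (hS : E ∆ S ⊆ repairEdges f E) (hfeas : NoIllusion f S) :
    #(blueCliqueExt f E \ Er) ≤ #(E \ S) := by
  refine (h.2 (blueCliqueExt f E \ (E \ S)) ⟨sdiff_subset, ?_⟩).trans ?_
  · exact (noIllusion_blueCliqueExt_sdiff_iff hS hout).2 fun v _ ↦ hfeas v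
  · exact card_le_card sdiff_sdiff_le

lemma NoIllusion.card_add_card_le (h : NoIllusion f E') (hE : Loopless E)
    (ha : IsOptimalMIAE f (redIndepRestr f E) Ea) (hr : IsOptimalMIRE f (blueCliqueExt f E) Er) :
    #(Ea \ redIndepRestr f E) + #(blueCliqueExt f E \ Er) ≤ #(E \ E') + #(E' \ E) := by
  have hout := ha.1.blueOutnumbers
  obtain ⟨S, hS, hfeas, hcard⟩ := h.exists_repair hout
  calc #(Ea \ redIndepRestr f E) + #(blueCliqueExt f E \ Er)
      ≤ #(S \ E) + #(E \ S) :=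
        add_le_add (ha.card_sdiff_le hE hS hfeas) (hr.card_sdiff_le hout hS hfeas)
    _ = #(E \ S) + #(S \ E) := add_comm _ _
    _ ≤ #(E \ E') + #(E' \ E) := hcard

theorem stmt15_general (hE : Loopless E) (ha : IsOptimalMIAE f (redIndepRestr f E) Ea)
    (hr : IsOptimalMIRE f (blueCliqueExt f E) Er) :
    NoIllusion f ((E ∪ (Ea \ redIndepRestr f E)) \ (blueCliqueExt f E \ Er)) ∧
    (∀ E' : Finset (Sym2 V), Loopless E' → NoIllusion f E' →
      (E \ ((E ∪ (Ea \ redIndepRestr f E)) \ (blueCliqueExt f E \ Er))).card +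
        (((E ∪ (Ea \ redIndepRestr f E)) \ (blueCliqueExt f E \ Er)) \ E).card ≤
      (E \ E').card + (E' \ E).card) ∧
    IsLeast {m : ℕ | ∃ E' : Finset (Sym2 V), Loopless E' ∧ NoIllusion f E' ∧
        (E \ E').card + (E' \ E).card = m}
      ((Ea \ redIndepRestr f E).card + (blueCliqueExt f E \ Er).card) := by
  have hout := ha.1.blueOutnumbers
  have hA := ha.sdiff_subset_repairEdges
  have hD := hr.sdiff_subset_repairEdges hE hout
  set A := Ea \ redIndepRestr f E with hA_def
  set D := blueCliqueExt f E \ Er with hD_def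
  set S := (E ∪ A) \ D
  have hadded : S \ E = A :=
    union_sdiff_sdiff_left (disjoint_sdiff.mono_right hA) (hD.trans inter_subset_right)
  have hremoved : E \ S = D := sdiff_union_sdiff_left (hD.trans inter_subset_right)
  have hS : E ∆ S ⊆ repairEdges f E := by
    rw [symmDiff_def, hadded, hremoved]
    exact union_subset (hD.trans inter_subset_left) (hA.trans sdiff_subset)
  have hfeas : NoIllusion f S := by
    rw [noIllusion_iff_of_symmDiff_subset hS hout, hadded, hremoved, hA_def, hD_def,
      union_sdiff_of_subset ha.1.subset, Finset.sdiff_sdiff_eq_self hr.1.subset]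
    exact ⟨ha.1.noIllusion, hr.1.noIllusion⟩
  have hcost : #(E \ S) + #(S \ E) = #A + #D := by rw [hremoved, hadded, add_comm]
  refine ⟨hfeas, fun E' _ h ↦ hcost.trans_le (h.card_add_card_le hE ha hr),
    ⟨S, hE.of_symmDiff_subset_repairEdges hS, hfeas, hcost⟩, ?_⟩
  rintro m ⟨E', -, h, rfl⟩
  exact h.card_add_card_le hE ha hr

end Optimal

/-- Combining the added edges `A` of an optimal MIAE solution of `G^a` with the removed
edges `D` of an optimal MIRE solution of `G^r` yields an optimal MIE solution of `G`. -/
theorem stmt15 [Fintype V] [DecidableEq V] (f : V → Bool) (E Ea Er : Finset (Sym2 V))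
    (hE : Loopless E)
    (hmaj : (Finset.univ.filter (fun v => f v = false)).card <
      (Finset.univ.filter (fun v => f v = true)).card)
    -- `Ea` is an optimal MIAE solution of `G^a = (V, redIndepRestr f E)`
    (hEa_sub : redIndepRestr f E ⊆ Ea) (hEa_loop : Loopless Ea) (hEa_feas : NoIllusion f Ea)
    (hEa_opt : ∀ E'' : Finset (Sym2 V), redIndepRestr f E ⊆ E'' → Loopless E'' →
      NoIllusion f E'' → (Ea \ redIndepRestr f E).card ≤ (E'' \ redIndepRestr f E).card)
    -- `Er` is an optimal MIRE solution of `G^r = (V, blueCliqueExt f E)`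
    (hEr_sub : Er ⊆ blueCliqueExt f E) (hEr_feas : NoIllusion f Er)
    (hEr_opt : ∀ E'' : Finset (Sym2 V), E'' ⊆ blueCliqueExt f E → NoIllusion f E'' →
      (blueCliqueExt f E \ Er).card ≤ (blueCliqueExt f E \ E'').card) :
    NoIllusion f ((E ∪ (Ea \ redIndepRestr f E)) \ (blueCliqueExt f E \ Er)) ∧
    (∀ E' : Finset (Sym2 V), Loopless E' → NoIllusion f E' →
      (E \ ((E ∪ (Ea \ redIndepRestr f E)) \ (blueCliqueExt f E \ Er))).card +
        (((E ∪ (Ea \ redIndepRestr f E)) \ (blueCliqueExt f E \ Er)) \ E).card ≤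
      (E \ E').card + (E' \ E).card) ∧
    IsLeast {m : ℕ | ∃ E' : Finset (Sym2 V), Loopless E' ∧ NoIllusion f E' ∧
        (E \ E').card + (E' \ E).card = m}
      ((Ea \ redIndepRestr f E).card + (blueCliqueExt f E \ Er).card) :=
  stmt15_general hE
    ⟨⟨hEa_sub, hEa_loop, hEa_feas⟩, fun S hS ↦ hEa_opt S hS.subset hS.loopless hS.noIllusion⟩
    ⟨⟨hEr_sub, hEr_feas⟩, fun S hS ↦ hEr_opt S hS.subset hS.noIllusion⟩
end
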